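/- arXiv:2307.09581 — 2 statements merged into one kernel-verified Lean document; each statement's English description precedes it below -/
import Mathlib

section
/- For every n ≥ 0, the value of the monic truncated Laguerre polynomial at the endpoint z satisfies P_n(z)²·z^{α+1}·e^{−z} = (α + 1 + 2n − b_n)·h_n, where h_n = ∫₀^z P_n(x)² x^α e^{−x} dx. -/
open MeasureTheory intervalIntegral Polynomial


lemma tl_integrable (α z : ℝ) (hα : -1 < α) (p : Polynomial ℝ) :
    IntervalIntegrable (fun x : ℝ => p.eval x * x ^ α * Real.exp (-x)) volume 0 z := by
  have h := intervalIntegrable_rpow' (a := 0) (b := z) hα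
  have h2 := h.continuousOn_mul (g := fun x : ℝ => p.eval x * Real.exp (-x))
    (by fun_prop)
  refine h2.congr ?_
  intro x _
  simp only
  ring

noncomputable def tlL (α z : ℝ) (hα : -1 < α) : Polynomial ℝ →ₗ[ℝ] ℝ where
  toFun p := ∫ x in (0:ℝ)..z, p.eval x * x ^ α * Real.exp (-x)
  map_add' p q := by
    rw [← intervalIntegral.integral_add (tl_integrable α z hα p) (tl_integrable α z hα q)]
    congr 1; ext x; simp; ring
  map_smul' c p := by
    simp only [RingHom.id_apply, smul_eq_mul]
    rw [← intervalIntegral.integral_const_mul]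
    congr 1; ext x; simp; ring

lemma tlL_apply (α z : ℝ) (hα : -1 < α) (p : Polynomial ℝ) :
    tlL α z hα p = ∫ x in (0:ℝ)..z, p.eval x * x ^ α * Real.exp (-x) := rfl

lemma tlL_C (α z : ℝ) (hα : -1 < α) (c : ℝ) (p : Polynomial ℝ) :
    tlL α z hα (C c * p) = c * tlL α z hα p := by
  rw [← smul_eq_C_mul, map_smul, smul_eq_mul]

lemma tl_ftc (α z : ℝ) (hα : -1 < α) (hz : 0 < z) (p : Polynomial ℝ) :
    tlL α z hα (X * derivative p + C (α + 1) * p - X * p)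
      = p.eval z * z ^ (α + 1) * Real.exp (-z) := by
  rw [tlL_apply]
  have h := intervalIntegral.integral_eq_sub_of_hasDerivAt_of_le hz.le
    (f := fun x : ℝ => p.eval x * x ^ (α + 1) * Real.exp (-x))
    (f' := fun x : ℝ => (X * derivative p + C (α + 1) * p - X * p).eval x * x ^ α * Real.exp (-x))
    ?_ ?_ (tl_integrable α z hα _)
  · rw [h]
    simp [Real.zero_rpow (by linarith : α + 1 ≠ 0)]
  · refine ContinuousOn.mul (ContinuousOn.mul (by fun_prop) ?_) (by fun_prop)
    exact (Real.continuous_rpow_const (by linarith)).continuousOn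
  · intro x hx
    have hx0 : 0 < x := hx.1
    have h1 := ((p.hasDerivAt x).mul
      (Real.hasDerivAt_rpow_const (x := x) (p := α + 1) (Or.inl hx0.ne'))).mul
      ((hasDerivAt_neg x).exp)
    refine h1.congr_deriv ?_
    simp only [Pi.mul_apply, eval_sub, eval_add, eval_mul, eval_X, eval_C, add_sub_cancel_right]
    rw [Real.rpow_add_one hx0.ne']
    ring

lemma tl_orth (α z : ℝ) (hα : -1 < α) (P : ℕ → Polynomial ℝ)
    (hP_monic : ∀ n, (P n).Monic) (hP_deg : ∀ n, (P n).natDegree = n)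
    (ho : ∀ m n, m ≠ n → tlL α z hα (P m * P n) = 0) (n : ℕ) :
    ∀ k, k ≤ n → ∀ q : Polynomial ℝ, (∀ m, k ≤ m → q.coeff m = 0) → tlL α z hα (q * P n) = 0 := by
  intro k
  induction k with
  | zero =>
    intro _ q hq
    have : q = 0 := by ext m; simpa using hq m (Nat.zero_le _)
    simp [this]
  | succ k ih =>
    intro hk q hq
    have h := ih (by omega) (q - C (q.coeff k) * P k) ?_
    · rw [sub_mul, map_sub, mul_assoc, tlL_C, ho k n (by omega)] at h
      linarith
    · intro m hm
      rw [coeff_sub, coeff_C_mul]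
      rcases hm.eq_or_lt with rfl | hm
      · have := (hP_monic k).coeff_natDegree
        rw [hP_deg] at this
        simp [this]
      · rw [hq m hm, coeff_eq_zero_of_natDegree_lt (p := P k) (by rw [hP_deg]; exact hm)]
        simp

/-- Endpoint evaluation identity: . -/
theorem truncated_laguerre_endpoint (α z : ℝ) (hα : -1 < α) (hz : 0 < z)
    (P : ℕ → Polynomial ℝ)
    (hP_monic : ∀ n, (P n).Monic)
    (hP_deg : ∀ n, (P n).natDegree = n)
    (hP_orth : ∀ m n, m ≠ n →
      ∫ x in (0:ℝ)..z, (P m).eval x * (P n).eval x * x ^ α * Real.exp (-x) = 0)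
    (a b : ℕ → ℝ)
    (ha0 : a 0 = 0)
    (hrec0 : Polynomial.X * P 0 = P 1 + Polynomial.C (b 0) * P 0)
    (hrec : ∀ n, 1 ≤ n →
      Polynomial.X * P n = P (n + 1) + Polynomial.C (b n) * P n + Polynomial.C (a n) * P (n - 1)) :
    ∀ n : ℕ,
      ((P n).eval z) ^ 2 * z ^ (α + 1) * Real.exp (-z) =
        (α + 1 + 2 * (n : ℝ) - b n) *
          ∫ x in (0:ℝ)..z, ((P n).eval x) ^ 2 * x ^ α * Real.exp (-x) := by
  have ho : ∀ m n, m ≠ n → tlL α z hα (P m * P n) = 0 := by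
    intro m n hmn
    rw [tlL_apply]
    simp only [eval_mul]
    exact hP_orth m n hmn
  intro n
  have hh : (∫ x in (0:ℝ)..z, ((P n).eval x) ^ 2 * x ^ α * Real.exp (-x))
      = tlL α z hα (P n * P n) := by
    rw [tlL_apply]
    simp only [eval_mul, sq]
  have hx : tlL α z hα (X * (P n * P n)) = b n * tlL α z hα (P n * P n) := by
    rw [← mul_assoc]
    rcases Nat.eq_zero_or_pos n with rfl | hn
    · rw [hrec0, add_mul, map_add, mul_assoc, tlL_C, ho 1 0 (by omega), zero_add]
    · rw [hrec n hn, add_mul, add_mul, map_add, map_add, mul_assoc, mul_assoc, tlL_C, tlL_C,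
        ho (n + 1) n (by omega), ho (n - 1) n (by omega)]
      ring
  have hd : tlL α z hα ((X * derivative (P n)) * P n) = n * tlL α z hα (P n * P n) := by
    have h := tl_orth α z hα P hP_monic hP_deg ho n n le_rfl
      (X * derivative (P n) - C (n : ℝ) * P n) ?_
    · rw [sub_mul, map_sub, mul_assoc (C _), tlL_C] at h
      linarith
    · intro m hm
      have hc : (X * derivative (P n)).coeff m = (P n).coeff m * m := by
        cases m with
        | zero => simp
        | succ m => rw [coeff_X_mul, coeff_derivative]; push_cast; ring
      rw [coeff_sub, coeff_C_mul, hc]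
      rcases hm.eq_or_lt with rfl | hm
      · ring
      · rw [coeff_eq_zero_of_natDegree_lt (by rw [hP_deg]; exact hm)]
        ring
  have hf := tl_ftc α z hα hz (P n * P n)
  have he : X * derivative (P n * P n) = (X * derivative (P n)) * P n
      + (X * derivative (P n)) * P n := by
    rw [derivative_mul]; ring
  rw [map_sub, map_add, he, map_add, hd, hx, tlL_C, eval_mul] at hf
  rw [hh, sq, ← hf]
  ring
end

section
/- For every n ≥ 1, the truncated Laguerre polynomials satisfy the structure relation (x² − z·x)·P_{n+1}′(x) = (n+1)·P_{n+2}(x) + (1/2)·(a_{n+2} + a_{n+1} + b_{n+1}² − (z + α + 2)·b_{n+1} + z·(1 + α))·P_{n+1}(x) + (b_{n+1} + b_n − (z + α + 2 + n))·a_{n+1}·P_n(x) + a_{n+1}·a_n·P_{n−1}(x). -/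
open MeasureTheory intervalIntegral Polynomial

namespace TL

lemma integ (α z : ℝ) (hα : -1 < α) (p : ℝ[X]) :
    IntervalIntegrable (fun x => p.eval x * (x ^ α * Real.exp (-x))) volume 0 z := by
  have h1 : IntervalIntegrable (fun x : ℝ => x ^ α) volume 0 z :=
    intervalIntegral.intervalIntegrable_rpow' hα
  have h2 : ContinuousOn (fun x : ℝ => p.eval x * Real.exp (-x)) (Set.uIcc 0 z) := by
    apply Continuous.continuousOn
    have := p.continuous
    fun_prop
  have := h1.mul_continuousOn h2
  refine this.congr ?_
  intro x _
  simp only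
  ring

noncomputable def L (α z : ℝ) (hα : -1 < α) : ℝ[X] →ₗ[ℝ] ℝ where
  toFun p := ∫ x in (0:ℝ)..z, p.eval x * (x ^ α * Real.exp (-x))
  map_add' p q := by
    rw [← intervalIntegral.integral_add (integ α z hα p) (integ α z hα q)]
    congr 1; ext x; simp; ring
  map_smul' c p := by
    simp only [RingHom.id_apply, smul_eq_mul]
    rw [← intervalIntegral.integral_const_mul]
    congr 1; ext x; simp; ring

lemma L_pos (α z : ℝ) (hα : -1 < α) (hz : 0 < z) (p : ℝ[X]) (hp : p ≠ 0) :
    0 < L α z hα (p * p) := by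
  change 0 < ∫ x in (0:ℝ)..z, (p * p).eval x * (x ^ α * Real.exp (-x))
  have hnn : ∀ x : ℝ, 0 < x → 0 < x ^ α * Real.exp (-x) := fun x hx => by positivity
  rw [intervalIntegral.integral_pos_iff_support_of_nonneg_ae']
  · refine ⟨hz, ?_⟩
    have hsub : Set.Ioc 0 z \ (p.roots.toFinset : Set ℝ) ⊆
        Function.support (fun x => (p * p).eval x * (x ^ α * Real.exp (-x))) ∩ Set.Ioc 0 z := by
      intro x hx
      refine ⟨?_, hx.1⟩
      have h1 : p.eval x ≠ 0 := by
        intro h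
        apply hx.2
        simp [hp, h]
      have := (hnn x hx.1.1).ne'
      simp only [Function.mem_support, eval_mul]
      exact mul_ne_zero (mul_ne_zero h1 h1) this
    refine lt_of_lt_of_le ?_ (measure_mono hsub)
    rw [measure_sdiff_null (Set.Finite.measure_zero (Finset.finite_toSet _) _)]
    simp [hz]
  · rw [Set.uIoc_of_le hz.le]
    filter_upwards [ae_restrict_mem measurableSet_Ioc] with x hx
    have := hnn x hx.1
    simp only [eval_mul, Pi.zero_apply]
    exact mul_nonneg (mul_self_nonneg _) this.le
  · exact integ α z hα _

lemma L_pearson (α z : ℝ) (hα : -1 < α) (hz : 0 < z) (p : ℝ[X]) :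
    L α z hα ((X ^ 2 - C z * X) * derivative p) =
      L α z hα ((X ^ 2 - C (z + α + 2) * X + C (z * (1 + α))) * p) := by
  rw [← sub_eq_zero, ← map_sub]
  change ∫ x in (0:ℝ)..z, _ = 0
  rw [intervalIntegral.integral_eq_sub_of_hasDerivAt_of_le (f := fun x =>
    x ^ (α + 1) * ((x - z) * p.eval x * Real.exp (-x))) hz.le]
  · have : α + 1 ≠ 0 := by linarith
    simp [Real.zero_rpow this]
  · have := p.continuous
    have h2 : Continuous (fun x : ℝ => x ^ (α + 1)) := Real.continuous_rpow_const (by linarith)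
    apply Continuous.continuousOn
    fun_prop
  · intro x hx
    have hx0 : x ≠ 0 := hx.1.ne'
    have h1 := Real.hasDerivAt_rpow_const (x := x) (p := α + 1) (Or.inl hx0)
    have h2 := (((hasDerivAt_id x).sub_const z).mul (p.hasDerivAt x)).mul
      ((hasDerivAt_neg x).exp)
    have h3 := h1.mul h2
    refine h3.congr_deriv ?_
    simp [Real.rpow_add_one hx0]
    ring
  · exact integ α z hα _

section alg
variable (L : ℝ[X] →ₗ[ℝ] ℝ) (P : ℕ → ℝ[X])
    (hm : ∀ n, (P n).Monic) (hd : ∀ n, (P n).natDegree = n)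
    (ho : ∀ m n, m ≠ n → L (P m * P n) = 0)

include hm hd in
lemma span_ind (M : ℝ[X] →ₗ[ℝ] ℝ) (k : ℕ) (h : ∀ j < k, M (P j) = 0) :
    ∀ q : ℝ[X], q.degree < k → M q = 0 := by
  induction k with
  | zero =>
    intro q hq
    have : q = 0 := by
      rw [← degree_eq_bot]
      simpa using hq
    simp [this]
  | succ k ih =>
    intro q hq
    have h1 : M (q - q.coeff k • P k) = 0 := by
      apply ih (fun j hj => h j (by omega))
      rw [degree_lt_iff_coeff_zero]
      intro i hi
      rcases hi.eq_or_lt with rfl | hi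
      · have := (hm k).coeff_natDegree
        rw [hd] at this
        simp [this]
      · have h2 : (P k).coeff i = 0 := coeff_eq_zero_of_natDegree_lt (by rw [hd]; exact hi)
        have h3 : q.coeff i = 0 := by
          rw [degree_lt_iff_coeff_zero] at hq
          exact hq i hi
        simp [h2, h3]
    rw [map_sub, map_smul, h k (by omega)] at h1
    simpa using h1

include hm hd ho in
lemma L_low (k : ℕ) (q : ℝ[X]) (hq : q.degree < k) : L (q * P k) = 0 := by
  have := span_ind P hm hd (L ∘ₗ (LinearMap.mulRight ℝ (P k))) k
    (fun j hj => by simpa using ho j k (by omega)) q hq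
  simpa using this

include hm hd ho in
lemma L_top (k : ℕ) (q : ℝ[X]) (c : ℝ) (hq : (q - C c * P k).degree < k) :
    L (q * P k) = c * L (P k * P k) := by
  have := L_low L P hm hd ho k _ hq
  rw [sub_mul, map_sub, mul_assoc, C_mul', map_smul, smul_eq_mul] at this
  linarith

include hm hd ho in
lemma L_mon (k : ℕ) (q : ℝ[X]) (c : ℝ) (hq : q.natDegree ≤ k) (hc : q.coeff k = c) :
    L (q * P k) = c * L (P k * P k) := by
  apply L_top L P hm hd ho
  rw [degree_lt_iff_coeff_zero]
  intro i hi
  rcases hi.eq_or_lt with rfl | hi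
  · have := (hm k).coeff_natDegree
    rw [hd] at this
    simp [this, hc]
  · have h2 : (P k).coeff i = 0 := coeff_eq_zero_of_natDegree_lt (by rw [hd]; exact hi)
    have h3 : q.coeff i = 0 := coeff_eq_zero_of_natDegree_lt (by omega)
    simp [h2, h3]

lemma cf_deg (z : ℝ) (p : ℝ[X]) (n : ℕ) (hp : p.natDegree ≤ n) :
    ((X ^ 2 - C z * X) * derivative p).natDegree ≤ n + 1 := by
  rcases Nat.eq_zero_or_pos n with rfl | hn
  · rw [derivative_of_natDegree_zero (by omega)]; simp
  have h1 := natDegree_derivative_le p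
  have h2 : (X ^ 2 - C z * X : ℝ[X]).natDegree ≤ 2 := by compute_degree
  have := natDegree_mul_le (p := (X ^ 2 - C z * X : ℝ[X])) (q := derivative p)
  omega

lemma cf_coeff (z : ℝ) (p : ℝ[X]) (n : ℕ) (hp : p.natDegree = n) (hm : p.Monic) :
    ((X ^ 2 - C z * X) * derivative p).coeff (n + 1) = (n : ℝ) := by
  have e : (X ^ 2 - C z * X) * derivative p = X * (X * derivative p) - C z * (X * derivative p) := by
    ring
  have hc := hm.coeff_natDegree
  rw [hp] at hc
  rw [e, coeff_sub, coeff_X_mul, coeff_C_mul, coeff_X_mul]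
  rcases n with _ | n
  · rw [derivative_of_natDegree_zero hp]; simp
  · rw [coeff_X_mul, coeff_derivative, coeff_derivative, hc,
      coeff_eq_zero_of_natDegree_lt (n := n + 1 + 1) (by omega)]
    push_cast; ring

lemma psi_deg (s t : ℝ) (p : ℝ[X]) (n : ℕ) (hp : p.natDegree ≤ n) :
    ((X ^ 2 - C s * X + C t) * p).natDegree ≤ n + 2 := by
  have h2 : (X ^ 2 - C s * X + C t : ℝ[X]).natDegree ≤ 2 := by compute_degree
  have := natDegree_mul_le (p := (X ^ 2 - C s * X + C t : ℝ[X])) (q := p)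
  omega

lemma psi_coeff (s t : ℝ) (p : ℝ[X]) (n : ℕ) (hp : p.natDegree = n) (hm : p.Monic) :
    ((X ^ 2 - C s * X + C t) * p).coeff (n + 2) = 1 := by
  have e : (X ^ 2 - C s * X + C t) * p = X * (X * p) - C s * (X * p) + C t * p := by
    ring
  have hc := hm.coeff_natDegree
  rw [hp] at hc
  rw [e, coeff_add, coeff_sub, coeff_X_mul, coeff_C_mul, coeff_X_mul, coeff_X_mul, coeff_C_mul, hc,
      coeff_eq_zero_of_natDegree_lt (n := n + 1) (by omega),
      coeff_eq_zero_of_natDegree_lt (n := n + 2) (by omega)]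
  simp

include hm hd ho in
lemma main (α z : ℝ) (hpos : ∀ p, p ≠ 0 → 0 < L (p * p))
    (hpe : ∀ p, L ((X ^ 2 - C z * X) * derivative p) =
      L ((X ^ 2 - C (z + α + 2) * X + C (z * (1 + α))) * p))
    (a b : ℕ → ℝ)
    (hrec : ∀ n, X * P (n + 1) = P (n + 2) + C (b (n + 1)) * P (n + 1) + C (a (n + 1)) * P n)
    (m : ℕ) :
    (X ^ 2 - C z * X) * derivative (P (m + 2)) =
        C ((m : ℝ) + 2) * P (m + 3)
          + C ((1 / 2) * (a (m + 3) + a (m + 2) + (b (m + 2)) ^ 2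
              - (z + α + 2) * b (m + 2) + z * (1 + α))) * P (m + 2)
          + C ((b (m + 2) + b (m + 1) - (z + α + 2 + ((m : ℝ) + 1))) * a (m + 2)) * P (m + 1)
          + C (a (m + 2) * a (m + 1)) * P m := by
  set φ : ℝ[X] := X ^ 2 - C z * X with hφ
  set s := z + α + 2 with hs
  set t := z * (1 + α) with ht
  set ψ : ℝ[X] := X ^ 2 - C s * X + C t with hψ
  -- norm ratios
  have hC : ∀ (c : ℝ) (p : ℝ[X]), L (C c * p) = c * L p := fun c p => by
    rw [C_mul', map_smul, smul_eq_mul]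
  have hh : ∀ n, a (n + 1) * L (P n * P n) = L (P (n + 1) * P (n + 1)) := by
    intro n
    have h1 : L ((X * P n) * P (n + 1)) = 1 * L (P (n + 1) * P (n + 1)) := by
      apply L_mon L P hm hd ho
      · have := natDegree_mul_le (p := (X : ℝ[X])) (q := P n)
        rw [hd, natDegree_X] at this; omega
      · rw [coeff_X_mul]
        have := (hm n).coeff_natDegree
        rwa [hd] at this
    have h2 : (X * P n) * P (n + 1) = P (n + 2) * P n + C (b (n + 1)) * (P (n + 1) * P n)
        + C (a (n + 1)) * (P n * P n) := by
      linear_combination P n * hrec n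
    rw [h2, map_add, map_add, hC, hC, ho _ _ (by omega), ho _ _ (by omega)] at h1
    linarith
  -- integration by parts
  have ibp : ∀ k, L (φ * derivative (P (m + 2)) * P k) =
      L ((ψ * P k) * P (m + 2)) - L ((φ * derivative (P k)) * P (m + 2)) := by
    intro k
    have h := hpe (P (m + 2) * P k)
    rw [derivative_mul, show φ * (derivative (P (m + 2)) * P k + P (m + 2) * derivative (P k)) =
      φ * derivative (P (m + 2)) * P k + (φ * derivative (P k)) * P (m + 2) by ring, map_add,
      show ψ * (P (m + 2) * P k) = (ψ * P k) * P (m + 2) by ring] at h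
    linarith
  rw [← sub_eq_zero]
  set c3 := (m : ℝ) + 2
  set c2 := (1 / 2) * (a (m + 3) + a (m + 2) + (b (m + 2)) ^ 2 - s * b (m + 2) + t) with hc2
  set c1 := (b (m + 2) + b (m + 1) - (s + ((m : ℝ) + 1))) * a (m + 2) with hc1
  set c0 := a (m + 2) * a (m + 1) with hc0
  set D := φ * derivative (P (m + 2)) -
    (C c3 * P (m + 3) + C c2 * P (m + 2) + C c1 * P (m + 1) + C c0 * P m) with hD
  have hDk : ∀ k, L (P k * D) = L (φ * derivative (P (m + 2)) * P k) -
      (c3 * L (P (m + 3) * P k) + c2 * L (P (m + 2) * P k) + c1 * L (P (m + 1) * P k)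
        + c0 * L (P m * P k)) := by
    intro k
    rw [← hC, ← hC, ← hC, ← hC, ← map_add, ← map_add, ← map_add, ← map_sub]
    congr 1; rw [hD]; ring
  have key : ∀ k, L (P k * D) = 0 := by
    intro k
    rw [hDk]
    have hdeg : (φ * derivative (P (m + 2))).natDegree ≤ m + 2 + 1 := cf_deg z (P (m + 2)) (m + 2) (hd _).le
    have hcases : m + 4 ≤ k ∨ k = m + 3 ∨ k = m + 2 ∨ k = m + 1 ∨ k = m ∨ k < m := by omega
    rcases hcases with hk | rfl | rfl | rfl | rfl | hk
    · rw [L_mon L P hm hd ho k _ 0 (by omega) (coeff_eq_zero_of_natDegree_lt (by omega)),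
        ho (m + 3) k (by omega), ho (m + 2) k (by omega), ho (m + 1) k (by omega),
        ho m k (by omega)]
      ring
    · rw [L_mon L P hm hd ho (m + 3) _ _ hdeg (cf_coeff z _ _ (hd _) (hm _)),
        ho (m + 2) _ (by omega), ho (m + 1) _ (by omega), ho m _ (by omega)]
      push_cast; ring
    · have h1 := ibp (m + 2)
      have e : (ψ * P (m + 2)) * P (m + 2) =
          P (m + 3) * P (m + 3) + C (b (m + 2) ^ 2 - s * b (m + 2) + t) * (P (m + 2) * P (m + 2))
          + C (a (m + 2) * a (m + 2)) * (P (m + 1) * P (m + 1))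
          + C (2 * b (m + 2) - s) * (P (m + 3) * P (m + 2))
          + C (2 * a (m + 2)) * (P (m + 3) * P (m + 1))
          + C ((2 * b (m + 2) - s) * a (m + 2)) * (P (m + 2) * P (m + 1)) := by
        have hr := hrec (m + 1)
        simp only [hψ, map_add, map_sub, map_mul, map_pow, map_ofNat]
        simp only [add_assoc, Nat.reduceAdd] at hr ⊢
        linear_combination (X * P (m + 2) + P (m + 3) + (C (b (m + 2)) * P (m + 2) + C (a (m + 2)) * P (m + 1)) - C s * P (m + 2)) * hr
      rw [e] at h1
      simp only [map_add L, hC] at h1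
      rw [ho (m + 3) (m + 2) (by omega), ho (m + 3) (m + 1) (by omega),
        ho (m + 2) (m + 1) (by omega)] at h1
      rw [ho (m + 3) _ (by omega), ho (m + 1) _ (by omega), ho m _ (by omega)]
      have g1 := hh (m + 2)
      have g2 := hh (m + 1)
      simp only [add_assoc, Nat.reduceAdd] at g1 g2
      rw [hc2]
      linear_combination (1 / 2) * h1 - (1 / 2) * g1 + (1 / 2) * a (m + 2) * g2
    · have h1 := ibp (m + 1)
      have e : (ψ * P (m + 1)) * P (m + 2) =
          P (m + 3) * P (m + 2) + C (b (m + 2) + b (m + 1) - s) * (P (m + 2) * P (m + 2))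
          + C (a (m + 2)) * (P (m + 1) * P (m + 2))
          + C ((b (m + 1) - s) * b (m + 1) + t) * (P (m + 1) * P (m + 2))
          + C ((b (m + 1) - s) * a (m + 1)) * (P m * P (m + 2))
          + C (a (m + 1)) * ((X * P m) * P (m + 2)) := by
        have hr := hrec (m + 1)
        have hr0 := hrec m
        simp only [hψ, map_add, map_sub, map_mul]
        simp only [add_assoc, Nat.reduceAdd] at hr ⊢
        linear_combination P (m + 2) * hr + (X + C (b (m + 1)) - C s) * P (m + 2) * hr0
      have hx : L ((X * P m) * P (m + 2)) = 0 := by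
        have hdx := natDegree_mul_le (p := (X : ℝ[X])) (q := P m)
        rw [hd, natDegree_X] at hdx
        rw [L_mon L P hm hd ho (m + 2) _ 0 (by omega) (coeff_eq_zero_of_natDegree_lt (by omega))]
        ring
      have hf := L_mon L P hm hd ho (m + 2) _ _ (cf_deg z (P (m + 1)) (m + 1) (hd _).le)
        (cf_coeff z _ _ (hd _) (hm _))
      rw [e, hf] at h1
      simp only [map_add L, hC] at h1
      rw [ho (m + 3) (m + 2) (by omega), ho (m + 1) (m + 2) (by omega),
        ho m (m + 2) (by omega), hx] at h1
      rw [ho (m + 3) _ (by omega), ho (m + 2) _ (by omega), ho m _ (by omega)]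
      have g2 := hh (m + 1)
      simp only [add_assoc, Nat.reduceAdd] at g2
      rw [hc1]
      push_cast at h1
      linear_combination h1 - (b (m + 2) + b (m + 1) - (s + ((m : ℝ) + 1))) * g2
    · have h1 := ibp k
      rw [L_mon L P hm hd ho (k + 2) _ _ (psi_deg s t (P k) k (hd _).le)
          (psi_coeff s t _ _ (hd _) (hm _)),
        L_mon L P hm hd ho (k + 2) (φ * derivative (P k)) 0
          ((cf_deg z (P k) k (hd _).le).trans (by omega))
          (coeff_eq_zero_of_natDegree_lt
            (lt_of_le_of_lt (cf_deg z (P k) k (hd _).le) (by omega)))] at h1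
      rw [ho (k + 3) _ (by omega), ho (k + 2) _ (by omega), ho (k + 1) _ (by omega)]
      have g1 := hh k
      have g2 := hh (k + 1)
      simp only [add_assoc, Nat.reduceAdd] at g2
      rw [hc0]
      linear_combination h1 - g2 - a (k + 2) * g1
    · rw [ibp, L_mon L P hm hd ho (m + 2) (φ * derivative (P k)) 0
          ((cf_deg z (P k) k (hd _).le).trans (by omega))
          (coeff_eq_zero_of_natDegree_lt
            (lt_of_le_of_lt (cf_deg z (P k) k (hd _).le) (by omega))),
        L_mon L P hm hd ho (m + 2) (ψ * P k) 0
          ((psi_deg s t (P k) k (hd _).le).trans (by omega))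
          (coeff_eq_zero_of_natDegree_lt
            (lt_of_le_of_lt (psi_deg s t (P k) k (hd _).le) (by omega))),
        ho (m + 3) k (by omega), ho (m + 2) k (by omega), ho (m + 1) k (by omega),
        ho m k (by omega)]
      ring
  by_contra hne
  have h1 := span_ind P hm hd (L ∘ₗ (LinearMap.mulRight ℝ D)) (D.natDegree + 1)
    (fun j _ => by simpa using key j) D
    (by
      rw [degree_eq_natDegree hne]
      exact_mod_cast Nat.lt_succ_self _)
  have h2 := hpos D hne
  simp at h1
  linarith

end alg
end TL

open MeasureTheory intervalIntegral Polynomial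

/-- Structure relation for the truncated Laguerre polynomials. -/
theorem truncated_laguerre_structure (α z : ℝ) (hα : -1 < α) (hz : 0 < z)
    (P : ℕ → Polynomial ℝ)
    (hP_monic : ∀ n, (P n).Monic)
    (hP_deg : ∀ n, (P n).natDegree = n)
    (hP_orth : ∀ m n, m ≠ n →
      ∫ x in (0:ℝ)..z, (P m).eval x * (P n).eval x * x ^ α * Real.exp (-x) = 0)
    (a b : ℕ → ℝ)
    (ha0 : a 0 = 0)
    (hrec0 : Polynomial.X * P 0 = P 1 + Polynomial.C (b 0) * P 0)
    (hrec : ∀ n, 1 ≤ n →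
      Polynomial.X * P n = P (n + 1) + Polynomial.C (b n) * P n + Polynomial.C (a n) * P (n - 1)) :
    ∀ n : ℕ, 1 ≤ n →
      (Polynomial.X ^ 2 - Polynomial.C z * Polynomial.X) *
          Polynomial.derivative (P (n + 1)) =
        Polynomial.C ((n : ℝ) + 1) * P (n + 2)
          + Polynomial.C ((1 / 2) * (a (n + 2) + a (n + 1) + (b (n + 1)) ^ 2
              - (z + α + 2) * b (n + 1) + z * (1 + α))) * P (n + 1)
          + Polynomial.C ((b (n + 1) + b n - (z + α + 2 + (n : ℝ))) * a (n + 1)) * P n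
          + Polynomial.C (a (n + 1) * a n) * P (n - 1) := by
  intro n hn
  obtain ⟨m, rfl⟩ : ∃ m, n = m + 1 := ⟨n - 1, by omega⟩
  have h := TL.main (TL.L α z hα) P hP_monic hP_deg
    (fun i j hij => by
      rw [← hP_orth i j hij]
      change ∫ x in (0:ℝ)..z, _ = _
      congr 1; ext x; simp; ring) α z (TL.L_pos α z hα hz) (TL.L_pearson α z hα hz) a b
    (fun k => hrec (k + 1) (by omega)) m
  have e : ((m + 1 : ℕ) : ℝ) + 1 = (m : ℝ) + 2 := by push_cast; ring
  rw [e]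
  push_cast
  exact h
end
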